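/- arXiv:2103.13400 — 5 statements merged into one kernel-verified Lean document; each statement's English description precedes it below -/
import Mathlib

section
/- Let A₁ and A₂ be unital complex *-algebras and let φ₁ and φ₂ be states on A₁ and A₂ respectively. Then the ℂ-linear functional φ₁ ⊗ φ₂ on the algebraic tensor product A₁ ⊗[ℂ] A₂, determined by (φ₁ ⊗ φ₂)(a ⊗ b) = φ₁(a)·φ₂(b), is a state: it maps the unit 1 ⊗ 1 to 1, and for every element t of A₁ ⊗[ℂ] A₂ the value (φ₁ ⊗ φ₂)(star t * t) is a nonnegative real number. -/
open scoped TensorProduct ComplexOrder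

/-- A state on a unital complex `*`-algebra: a `ℂ`-linear functional sending `1` to `1`
and `star a * a` to a nonnegative real number (using the partial order on `ℂ`,
where `0 ≤ z` means `z` is real and nonnegative). -/
def IsState {A : Type*} [Ring A] [StarRing A] [Algebra ℂ A]
    (ω : A →ₗ[ℂ] ℂ) : Prop :=
  ω 1 = 1 ∧ ∀ a : A, 0 ≤ ω (star a * a)

/-- A positive linear functional on a unital complex `*`-algebra commutes with `star`. -/
theorem map_star_of_map_star_mul_self_nonneg {A : Type*} [Ring A] [StarRing A] [Algebra ℂ A]
    [StarModule ℂ A] (ω : A →ₗ[ℂ] ℂ) (hω : ∀ a : A, 0 ≤ ω (star a * a)) (a : A) :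
    ω (star a) = star (ω a) := by
  have h_one := (Complex.nonneg_iff.mp (hω 1)).2
  have h_self := (Complex.nonneg_iff.mp (hω a)).2
  have h_add := (Complex.nonneg_iff.mp (hω (1 + a))).2
  have h_add_I := (Complex.nonneg_iff.mp (hω (1 + Complex.I • a))).2
  simp only [star_add, star_one, star_smul, add_mul, mul_add, one_mul, mul_one, smul_mul_assoc,
    mul_smul_comm, map_add, map_smul, smul_eq_mul, Complex.add_im, Complex.mul_im, Complex.mul_re,
    Complex.I_re, Complex.I_im, Complex.star_def, Complex.conj_I, Complex.neg_re,
    Complex.neg_im] at h_one h_self h_add h_add_I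
  apply Complex.ext <;> simp only [Complex.star_def, Complex.conj_re, Complex.conj_im] <;> linarith

/-- The Gram matrix of a family of elements with respect to a positive linear functional is
positive semidefinite. -/
theorem posSemidef_gram_of_map_star_mul_self_nonneg {A ι : Type*} [Ring A] [StarRing A]
    [Algebra ℂ A] [StarModule ℂ A] (ω : A →ₗ[ℂ] ℂ) (hω : ∀ a : A, 0 ≤ ω (star a * a))
    (v : ι → A) : (Matrix.of fun i j ↦ ω (star (v i) * v j)).PosSemidef := by
  refine ⟨Matrix.IsHermitian.ext fun i j ↦ ?_, fun x ↦ ?_⟩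
  · simp [← map_star_of_map_star_mul_self_nonneg ω hω]
  · convert hω (x.sum fun i c ↦ c • v i) using 1
    simp only [Finsupp.sum, star_sum, star_smul, Finset.sum_mul_sum, map_sum, smul_mul_assoc,
      mul_smul_comm, map_smul, smul_eq_mul, Matrix.of_apply]
    exact Finset.sum_congr rfl fun i _ ↦ Finset.sum_congr rfl fun j _ ↦ by ring

/-- The tensor product of two states is a state: if `Φ` is the `ℂ`-linear functional on
`A₁ ⊗[ℂ] A₂` determined by `Φ (a ⊗ₜ b) = φ₁ a * φ₂ b`, and `st` is the star operation on
`A₁ ⊗[ℂ] A₂` determined by `st (a ⊗ₜ b) = star a ⊗ₜ star b`, then `Φ 1 = 1` and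
`Φ (st t * t)` is nonnegative for every `t`. -/
theorem tensor_product_of_states_is_state
    {A₁ A₂ : Type*}
    [Ring A₁] [StarRing A₁] [Algebra ℂ A₁] [StarModule ℂ A₁]
    [Ring A₂] [StarRing A₂] [Algebra ℂ A₂] [StarModule ℂ A₂]
    (φ₁ : A₁ →ₗ[ℂ] ℂ) (φ₂ : A₂ →ₗ[ℂ] ℂ)
    (hφ₁ : IsState φ₁) (hφ₂ : IsState φ₂)
    (st : A₁ ⊗[ℂ] A₂ →+ A₁ ⊗[ℂ] A₂)
    (hst : ∀ (a : A₁) (b : A₂), st (a ⊗ₜ[ℂ] b) = star a ⊗ₜ[ℂ] star b)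
    (Φ : A₁ ⊗[ℂ] A₂ →ₗ[ℂ] ℂ)
    (hΦ : ∀ (a : A₁) (b : A₂), Φ (a ⊗ₜ[ℂ] b) = φ₁ a * φ₂ b) :
    Φ 1 = 1 ∧ ∀ t : A₁ ⊗[ℂ] A₂, 0 ≤ Φ (st t * t) := by
  refine ⟨by rw [Algebra.TensorProduct.one_def, hΦ, hφ₁.1, hφ₂.1, one_mul], fun t ↦ ?_⟩
  obtain ⟨S, rfl⟩ := TensorProduct.exists_finset t
  have h := ((posSemidef_gram_of_map_star_mul_self_nonneg φ₁ hφ₁.2 fun i : S ↦ i.1.1).hadamard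
    (posSemidef_gram_of_map_star_mul_self_nonneg φ₂ hφ₂.2
      fun i : S ↦ i.1.2)).dotProduct_mulVec_nonneg 1
  convert h using 1
  simp only [← Finset.sum_coe_sort S, map_sum, hst, Finset.sum_mul_sum,
    Algebra.TensorProduct.tmul_mul_tmul, hΦ, dotProduct, Matrix.mulVec, Matrix.hadamard_apply,
    Matrix.of_apply, star_one, Pi.one_apply, one_mul, mul_one]
end

section
/- Let R be a unital complex *-algebra and let A and B be unital *-subalgebras of R such that every element of A commutes with every element of B. Let ω be a state on R which is a product state relative to A and B. Then for every N ∈ ℕ and all families x : Fin N → A and y : Fin N → B, the double sum ∑_{j,k} ω((x k) * star (x j) * star (y j) * (y k)) is a nonnegative real number. -/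
open scoped ComplexOrder

/-- A state is Hermitian as a sesquilinear form `(a, b) ↦ ω (star a * b)`. -/
theorem IsState.star_apply_star_mul {R : Type*} [Ring R] [StarRing R] [Algebra ℂ R]
    [StarModule ℂ R] {ω : R →ₗ[ℂ] ℂ} (hω : IsState ω) (a b : R) :
    star (ω (star a * b)) = ω (star b * a) := by
  have ha := (Complex.nonneg_iff.mp (hω.2 a)).2
  have hb := (Complex.nonneg_iff.mp (hω.2 b)).2
  have hab := (Complex.nonneg_iff.mp (hω.2 (a + b))).2
  have hiab := (Complex.nonneg_iff.mp (hω.2 (a + Complex.I • b))).2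
  simp only [star_add, star_smul, add_mul, mul_add, map_add, smul_mul_assoc, mul_smul_comm,
    map_smul, smul_eq_mul, Complex.star_def, Complex.conj_I, Complex.add_im, Complex.mul_im,
    Complex.mul_re, Complex.neg_re, Complex.neg_im, Complex.I_re, Complex.I_im] at hab hiab
  apply Complex.ext
  · simp only [Complex.star_def, Complex.conj_re]
    linarith
  · simp only [Complex.star_def, Complex.conj_im]
    linarith

/-- The Gram matrix of a finite family with respect to a state is positive semidefinite. -/
theorem IsState.posSemidef_gram {R : Type*} [Ring R] [StarRing R] [Algebra ℂ R]
    [StarModule ℂ R] {ω : R →ₗ[ℂ] ℂ} (hω : IsState ω) {ι : Type*} [Fintype ι] (v : ι → R) :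
    (Matrix.of fun i j => ω (star (v i) * v j)).PosSemidef := by
  refine .of_dotProduct_mulVec_nonneg ?_ fun c => ?_
  · ext i j
    exact hω.star_apply_star_mul (v j) (v i)
  · convert hω.2 (∑ i, c i • v i)
    rw [star_sum, Finset.sum_mul_sum]
    simp only [dotProduct, Matrix.mulVec, Matrix.of_apply, Pi.star_apply, star_smul, map_sum,
      smul_mul_assoc, mul_smul_comm, map_smul, smul_eq_mul, Finset.mul_sum]
    refine Finset.sum_congr rfl fun i _ => Finset.sum_congr rfl fun j _ => ?_
    ring

/-- Every product state (relative to two commuting unital `*`-subalgebras `A`, `B` of `R`)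
has the Verch-Werner ppt property. -/
theorem product_state_verch_werner_ppt
    {R : Type*} [Ring R] [StarRing R] [Algebra ℂ R] [StarModule ℂ R]
    (A B : StarSubalgebra ℂ R)
    (hcomm : ∀ a ∈ A, ∀ b ∈ B, a * b = b * a)
    (ω : R →ₗ[ℂ] ℂ) (hω : IsState ω)
    (hprod : ∀ a ∈ A, ∀ b ∈ B, ω (a * b) = ω a * ω b)
    (N : ℕ) (x : Fin N → A) (y : Fin N → B) :
    0 ≤ ∑ j : Fin N, ∑ k : Fin N,
      ω ((x k : R) * star (x j : R) * star (y j : R) * (y k : R)) := by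
  have hx := (hω.posSemidef_gram fun i => star (x i : R)).transpose
  have hy := hω.posSemidef_gram fun i => (y i : R)
  convert (hx.hadamard hy).dotProduct_mulVec_nonneg 1
  simp only [dotProduct, Matrix.mulVec, Matrix.hadamard_apply, Matrix.transpose_apply,
    Matrix.of_apply, star_one, Pi.one_apply, one_mul, mul_one, star_star]
  refine Finset.sum_congr rfl fun j _ => Finset.sum_congr rfl fun k _ => ?_
  rw [mul_assoc (_ * _)]
  exact hprod _ (mul_mem (x k).2 (star_mem (x j).2)) _ (mul_mem (star_mem (y j).2) (y k).2)
end

section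
/- Let A be a real symmetric 2×2 matrix such that the complex 2×2 matrix A + i·s is positive semidefinite, where s = !![0, 1; −1, 0] and real matrices are regarded as complex matrices by entrywise inclusion. Then A is positive semidefinite, det A ≥ 1, and trace A ≥ 2. -/
open scoped ComplexOrder
/-- The standard symplectic form on one mode. -/
def sMat : Matrix (Fin 2) (Fin 2) ℝ := !![0, 1; -1, 0]

/-- If `A` is a real symmetric `2×2` matrix such that `A + i·s` is positive semidefinite
(as a complex matrix), then `A` is positive semidefinite, `det A ≥ 1` and `trace A ≥ 2`. -/
theorem posSemidef_det_ge_one_trace_ge_two_of_uncertainty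
    (A : Matrix (Fin 2) (Fin 2) ℝ) (hA : A.IsSymm)
    (h : (A.map (Complex.ofReal ·) +
        Complex.I • sMat.map (Complex.ofReal ·)).PosSemidef) :
    A.PosSemidef ∧ 1 ≤ A.det ∧ 2 ≤ A.trace := by
  have hsymm : A 1 0 = A 0 1 := hA.apply 0 1
  have hpos : A.PosSemidef := by
    refine .of_dotProduct_mulVec_nonneg (by simpa [Matrix.IsHermitian] using hA.eq) fun x ↦ ?_
    have hx := (Complex.nonneg_iff.mp (h.dotProduct_mulVec_nonneg fun i ↦ (x i : ℂ))).1
    simp [dotProduct, Matrix.mulVec, Fin.sum_univ_two, sMat] at hx ⊢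
    linarith
  have hdet : 1 ≤ A.det := by
    have hd := (Complex.nonneg_iff.mp h.det_nonneg).1
    simp [Matrix.det_fin_two, sMat] at hd ⊢
    linarith
  refine ⟨hpos, hdet, ?_⟩
  have h₀ : 0 ≤ A 0 0 := hpos.diag_nonneg
  have h₁ : 0 ≤ A 1 1 := hpos.diag_nonneg
  rw [Matrix.det_fin_two, hsymm] at hdet
  rw [Matrix.trace_fin_two]
  nlinarith [sq_nonneg (A 0 0 - A 1 1), sq_nonneg (A 0 1)]
end

section
/- Let A be a real symmetric 2×2 matrix such that the complex matrix A + i·s is positive semidefinite, where s = !![0, 1; −1, 0] and real matrices are regarded as complex by entrywise inclusion. If trace A = 2, then A is the 2×2 identity matrix. -/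
open scoped ComplexOrder

/-- If `A` is a real symmetric `2×2` matrix such that `A + i·s` is positive semidefinite
(as a complex matrix) and `trace A = 2`, then `A` is the identity matrix. -/
theorem eq_one_of_uncertainty_trace_eq_two
    (A : Matrix (Fin 2) (Fin 2) ℝ) (hA : A.IsSymm)
    (h : (A.map (Complex.ofReal ·) +
        Complex.I • sMat.map (Complex.ofReal ·)).PosSemidef)
    (htr : A.trace = 2) :
    A = 1 := by
  have hsymm : A 1 0 = A 0 1 := hA.apply 0 1
  have htrace : A 0 0 + A 1 1 = 2 := by rw [← htr, Matrix.trace_fin_two]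
  have hdet : 0 ≤ A 0 0 * A 1 1 - A 0 1 ^ 2 - 1 := by
    have hre := (Complex.le_def.mp h.det_nonneg).1
    simp [Matrix.det_fin_two, sMat, hsymm] at hre
    linarith
  have hoff : A 0 1 = 0 := by
    nlinarith [sq_nonneg (A 0 0 - A 1 1), sq_nonneg (A 0 1)]
  have hdiag : A 0 0 = A 1 1 := by
    nlinarith [sq_nonneg (A 0 0 - A 1 1), sq_nonneg (A 0 1)]
  ext i j
  fin_cases i <;> fin_cases j <;> simp <;> linarith
end

section
/- Let A, B, C : ℝ → Matrix (Fin 2) (Fin 2) ℝ be functions that are continuous at 0. Suppose C(0) = 0, that A(0) and B(0) are symmetric, that the complex matrices A(0) + i·s and B(0) + i·s are positive semidefinite (where s = !![0, 1; −1, 0] and real matrices are regarded as complex by entrywise inclusion), and that det A(0) ≠ 1 and det B(0) ≠ 1. Define the Simon function p_S(λ) := det A(λ) + det B(λ) − det A(λ)·det B(λ) + trace(A(λ)·s·C(λ)·s·B(λ)·s·C(λ)ᵀ·s) − (1 + det C(λ))². Then there exists λ_min > 0 such that p_S(λ) < 0 for all λ ∈ ℝ with |λ| ≤ λ_min. -/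
open scoped ComplexOrder Matrix

/-- The Simon function of the covariance blocks `A`, `B`, `C` at coupling strength `λ`:
the two-mode quasi-free state is entangled iff `simonFn A B C λ > 0`. -/
noncomputable def simonFn (A B C : ℝ → Matrix (Fin 2) (Fin 2) ℝ) (lam : ℝ) : ℝ :=
  (A lam).det + (B lam).det - (A lam).det * (B lam).det
    + (A lam * sMat * C lam * sMat * B lam * sMat * (C lam)ᵀ * sMat).trace
    - (1 + (C lam).det) ^ 2

/-- A symmetric real `2 × 2` matrix satisfying the one-mode uncertainty relation has determinant
at least `1`. -/
theorem one_le_det_of_posSemidef_add_I_smul_sMat {M : Matrix (Fin 2) (Fin 2) ℝ} (hM : M.IsSymm)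
    (hpos : (M.map (Complex.ofReal ·) + Complex.I • sMat.map (Complex.ofReal ·)).PosSemidef) :
    1 ≤ M.det := by
  have hdet : (M.map (Complex.ofReal ·) + Complex.I • sMat.map (Complex.ofReal ·)).det =
      ((M.det - 1 : ℝ) : ℂ) := by
    simp [Matrix.det_fin_two, sMat, hM.apply 0 1]
    linear_combination Complex.I_sq
  have h := hpos.det_nonneg
  rw [hdet, Complex.zero_le_real] at h
  linarith

/-- The Simon function is continuous wherever the covariance blocks are. -/
theorem ContinuousAt.simonFn {A B C : ℝ → Matrix (Fin 2) (Fin 2) ℝ} {x : ℝ}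
    (hA : ContinuousAt A x) (hB : ContinuousAt B x) (hC : ContinuousAt C x) :
    ContinuousAt (simonFn A B C) x := by
  have det_continuous : Continuous (Matrix.det : Matrix (Fin 2) (Fin 2) ℝ → ℝ) :=
    continuous_id.matrix_det
  have trace_continuous : Continuous fun p : Matrix (Fin 2) (Fin 2) ℝ × Matrix (Fin 2) (Fin 2) ℝ ×
      Matrix (Fin 2) (Fin 2) ℝ =>
      (p.1 * sMat * p.2.2 * sMat * p.2.1 * sMat * p.2.2ᵀ * sMat).trace := by
    fun_prop
  have hdetA := det_continuous.continuousAt.comp hA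
  have hdetB := det_continuous.continuousAt.comp hB
  have hdetC := det_continuous.continuousAt.comp hC
  have htrace := ContinuousAt.comp' (f := fun y => (A y, B y, C y))
    trace_continuous.continuousAt (hA.prodMk (hB.prodMk hC))
  exact (((hdetA.add hdetB).sub (hdetA.mul hdetB)).add htrace).sub
    ((continuousAt_const.add hdetC).pow 2)

/-- Existence of a critical coupling strength: if the covariance blocks
`A, B, C : ℝ → Matrix (Fin 2) (Fin 2) ℝ` are continuous at `0` with `C 0 = 0`, the initial
covariance matrices `A 0`, `B 0` are symmetric and satisfy the one-mode uncertainty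
relation, and `det (A 0) ≠ 1`, `det (B 0) ≠ 1` (i.e. the initial restricted states are
mixed), then there is `λ_min > 0` such that the Simon function is negative — no
entanglement — for all couplings `λ` with `|λ| ≤ λ_min`. -/
theorem exists_critical_coupling
    (A B C : ℝ → Matrix (Fin 2) (Fin 2) ℝ)
    (hA : ContinuousAt A 0) (hB : ContinuousAt B 0) (hC : ContinuousAt C 0)
    (hC0 : C 0 = 0)
    (hA0symm : (A 0).IsSymm) (hB0symm : (B 0).IsSymm)
    (hA0 : ((A 0).map (Complex.ofReal ·) +
        Complex.I • sMat.map (Complex.ofReal ·)).PosSemidef)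
    (hB0 : ((B 0).map (Complex.ofReal ·) +
        Complex.I • sMat.map (Complex.ofReal ·)).PosSemidef)
    (hAdet : (A 0).det ≠ 1) (hBdet : (B 0).det ≠ 1) :
    ∃ lammin > (0 : ℝ), ∀ lam : ℝ, |lam| ≤ lammin → simonFn A B C lam < 0 := by
  have hA1 := (one_le_det_of_posSemidef_add_I_smul_sMat hA0symm hA0).lt_of_ne' hAdet
  have hB1 := (one_le_det_of_posSemidef_add_I_smul_sMat hB0symm hB0).lt_of_ne' hBdet
  have hneg : simonFn A B C 0 < 0 := by
    have hval : simonFn A B C 0 = -(((A 0).det - 1) * ((B 0).det - 1)) := by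
      simp [simonFn, hC0]
      ring
    rw [hval, neg_lt_zero]
    exact mul_pos (sub_pos.2 hA1) (sub_pos.2 hB1)
  obtain ⟨r, hr, hball⟩ := Metric.nhds_basis_closedBall.eventually_iff.1
    ((hA.simonFn hB hC).eventually_lt_const hneg)
  exact ⟨r, hr, fun lam hlam => hball (by simpa using hlam)⟩
end
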